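/- arXiv:math/0510494 — 2 statements merged into one kernel-verified Lean document; each statement's English description precedes it below -/
import Mathlib

section
/- For every K > 0 there exist constants C > 0 and κ > 0 such that for every real a ≥ 0, ∑_{p=0}^∞ K^p a^p p^{3p/4} / p! ≤ C · exp(κ a⁴), where the p = 0 term of the series is interpreted as 1. -/
/-!
Since `n ^ n ≤ e ^ n * n!`, the `n`-th term of `∑ x ^ n * n ^ ((1 - 1 / q) * n) / n!` is at most
`(e * |x| / n ^ (1 / q)) ^ n = (z / n ^ (1 / q)) ^ n * (1 / 2) ^ n` with `z = 2 * e * |x|`; the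
factor `2` makes room for a geometric series. The first factor is bounded uniformly in `n`, because
its `q`-th power is `(z ^ q / n) ^ n ≤ exp (z ^ q)`. The theorem is the case `q = 4`.
-/

open Real

theorem natCast_pow_self_le_exp_one_pow_mul_factorial (n : ℕ) :
    (n : ℝ) ^ n ≤ exp 1 ^ n * n.factorial := by
  rw [exp_one_pow, ← div_le_iff₀ (by positivity)]
  exact pow_div_factorial_le_exp n n.cast_nonneg n

theorem div_natCast_pow_le_exp {t : ℝ} (ht : 0 ≤ t) (n : ℕ) : (t / n) ^ n ≤ exp t := by
  rcases eq_or_ne n 0 with rfl | hn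
  · simpa using ht
  calc (t / n) ^ n ≤ exp (t / n) ^ n := by
        gcongr
        linarith [add_one_le_exp (t / n)]
    _ = exp t := by rw [← exp_nat_mul, mul_div_cancel₀ t (Nat.cast_ne_zero.mpr hn)]

theorem div_natCast_rpow_inv_pow_le_exp {z q : ℝ} (hz : 0 ≤ z) (hq : 0 < q) (n : ℕ) :
    (z / (n : ℝ) ^ q⁻¹) ^ n ≤ exp (q⁻¹ * z ^ q) := by
  have h_nonneg : 0 ≤ z ^ q / n := by positivity
  calc (z / (n : ℝ) ^ q⁻¹) ^ n = ((z ^ q / n) ^ q⁻¹) ^ n := by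
        rw [div_rpow (by positivity) n.cast_nonneg, rpow_rpow_inv hz hq.ne']
    _ = ((z ^ q / n) ^ n) ^ q⁻¹ := rpow_pow_comm h_nonneg _ _
    _ ≤ exp (z ^ q) ^ q⁻¹ := by
        gcongr
        exact div_natCast_pow_le_exp (by positivity) n
    _ = exp (q⁻¹ * z ^ q) := by rw [← exp_mul, mul_comm]

theorem natCast_rpow_one_sub_mul_div_factorial_le (s : ℝ) (n : ℕ) :
    (n : ℝ) ^ ((1 - s) * n) / n.factorial ≤ (exp 1 / (n : ℝ) ^ s) ^ n := by
  rcases eq_or_ne n 0 with rfl | hn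
  · simp
  have hn_pos : (0 : ℝ) < n := by positivity
  calc (n : ℝ) ^ ((1 - s) * n) / n.factorial
      = (n : ℝ) ^ n / ((n : ℝ) ^ s) ^ n / n.factorial := by
        rw [rpow_mul hn_pos.le, rpow_natCast, rpow_sub hn_pos, rpow_one, div_pow]
    _ ≤ exp 1 ^ n * n.factorial / ((n : ℝ) ^ s) ^ n / n.factorial := by
        gcongr
        exact natCast_pow_self_le_exp_one_pow_mul_factorial n
    _ = (exp 1 / (n : ℝ) ^ s) ^ n := by
        rw [div_pow]
        field_simp

theorem abs_pow_mul_natCast_rpow_div_factorial_le (x : ℝ) {q : ℝ} (hq : 0 < q) (n : ℕ) :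
    |x ^ n * (n : ℝ) ^ ((1 - q⁻¹) * n) / n.factorial| ≤
      exp (q⁻¹ * (2 * exp 1 * |x|) ^ q) * (1 / 2) ^ n := by
  calc |x ^ n * (n : ℝ) ^ ((1 - q⁻¹) * n) / n.factorial|
      = |x| ^ n * ((n : ℝ) ^ ((1 - q⁻¹) * n) / n.factorial) := by
        rw [mul_div_assoc, abs_mul, abs_pow, abs_of_nonneg (a := _ / _) (by positivity)]
    _ ≤ |x| ^ n * (exp 1 / (n : ℝ) ^ q⁻¹) ^ n := by
        gcongr
        exact natCast_rpow_one_sub_mul_div_factorial_le q⁻¹ n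
    _ = (2 * exp 1 * |x| / (n : ℝ) ^ q⁻¹) ^ n * (1 / 2) ^ n := by
        rw [← mul_pow, ← mul_pow]
        ring
    _ ≤ exp (q⁻¹ * (2 * exp 1 * |x|) ^ q) * (1 / 2) ^ n := by
        gcongr
        exact div_natCast_rpow_inv_pow_le_exp (by positivity) hq n

theorem statement7_general (x : ℝ) {q : ℝ} (hq : 0 < q) :
    Summable (fun p : ℕ => x ^ p * (p : ℝ) ^ ((1 - q⁻¹) * p) / p.factorial) ∧
      |∑' p : ℕ, x ^ p * (p : ℝ) ^ ((1 - q⁻¹) * p) / p.factorial| ≤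
        2 * exp (q⁻¹ * (2 * exp 1 * |x|) ^ q) := by
  have h_geom := hasSum_geometric_two.mul_left (exp (q⁻¹ * (2 * exp 1 * |x|) ^ q))
  have h_bound := abs_pow_mul_natCast_rpow_div_factorial_le x hq
  refine ⟨.of_norm_bounded h_geom.summable h_bound, ?_⟩
  rw [mul_comm 2, ← norm_eq_abs]
  exact tsum_of_norm_bounded h_geom h_bound

/-- For every `K > 0` there are `C, κ > 0` such that for all `a ≥ 0`,
`∑_{p=0}^∞ K^p a^p p^{3p/4} / p! ≤ C exp(κ a⁴)` (with the `p = 0` term equal to `1`). -/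
theorem statement7 (K : ℝ) (hK : 0 < K) :
    ∃ C : ℝ, 0 < C ∧ ∃ κ : ℝ, 0 < κ ∧ ∀ a : ℝ, 0 ≤ a →
      Summable (fun p : ℕ =>
        K ^ p * a ^ p * (p : ℝ) ^ (3 * (p : ℝ) / 4) / (p.factorial : ℝ)) ∧
      ∑' p : ℕ, K ^ p * a ^ p * (p : ℝ) ^ (3 * (p : ℝ) / 4) / (p.factorial : ℝ) ≤
        C * Real.exp (κ * a ^ 4) := by
  refine ⟨2, two_pos, 4⁻¹ * (2 * exp 1 * K) ^ 4, by positivity, fun a ha => ?_⟩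
  have h_exponent (p : ℕ) : 3 * (p : ℝ) / 4 = (1 - 4⁻¹) * p := by ring
  have h_constant : 4⁻¹ * (2 * exp 1 * K) ^ 4 * a ^ 4 = 4⁻¹ * (2 * exp 1 * |K * a|) ^ (4 : ℝ) := by
    rw [abs_of_nonneg (by positivity), rpow_ofNat]
    ring
  simp only [← mul_pow, h_exponent, h_constant]
  exact (statement7_general (K * a) four_pos).imp_right (le_abs_self _).trans
end

section
/- Let (X, μ) be a measure space with μ(X) < ∞ and let K > 0. Then there exist constants C > 0 and κ > 0, depending only on K and μ(X), with the following property: whenever φ : X → ℝ is measurable, A ≥ 0, and ‖φ‖_{L^p(μ)} ≤ K A p^{3/4} for every real p ≥ 1, then ∫_X e^{|φ|} dμ ≤ C · exp(κ A⁴). -/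
open MeasureTheory

/-!
Expand `exp ‖f‖` in powers of `‖f‖` and integrate term by term. A bound
`eLpNorm f n μ ≤ B * n ^ θ` turns the `n`-th term into `(B * n ^ θ) ^ n / n!`. Since
`n ^ n ≤ exp n * n!`, this is at most `(B * exp θ) ^ n / n! ^ (1 - θ)`, which up to a factor
`2⁻¹ ^ n` is the `(1 - θ)`-th power of a term of the series of `exp ((2 * B * exp θ) ^ (1 - θ)⁻¹)`.
For `θ = 3 / 4` the exponent `(1 - θ)⁻¹` is `4`.
-/

section Growth

open scoped Nat

lemma pow_div_factorial_rpow_le_exp {b s : ℝ} (hb : 0 ≤ b) (hs : 0 < s) (n : ℕ) :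
    b ^ n / (n ! : ℝ) ^ s ≤ Real.exp (s * b ^ s⁻¹) := by
  have hpow : b ^ n = ((b ^ s⁻¹) ^ n) ^ s := by
    rw [← Real.rpow_pow_comm (by positivity), Real.rpow_inv_rpow hb hs.ne']
  calc b ^ n / (n ! : ℝ) ^ s = ((b ^ s⁻¹) ^ n / n !) ^ s := by
        rw [hpow, Real.div_rpow (by positivity) (by positivity)]
    _ ≤ Real.exp (b ^ s⁻¹) ^ s := by
        gcongr
        exact Real.pow_div_factorial_le_exp _ (by positivity) n
    _ = Real.exp (s * b ^ s⁻¹) := by rw [← Real.exp_mul, mul_comm]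

lemma natCast_rpow_pow_self_le {θ : ℝ} (hθ : 0 ≤ θ) (n : ℕ) :
    ((n : ℝ) ^ θ) ^ n ≤ Real.exp θ ^ n * (n ! : ℝ) ^ θ := by
  have hpow_le : (n : ℝ) ^ n ≤ Real.exp n * n ! :=
    (div_le_iff₀ (by positivity)).1 (Real.pow_div_factorial_le_exp _ n.cast_nonneg n)
  calc ((n : ℝ) ^ θ) ^ n = ((n : ℝ) ^ n) ^ θ := Real.rpow_pow_comm n.cast_nonneg θ n
    _ ≤ (Real.exp n * n !) ^ θ := by gcongr
    _ = Real.exp θ ^ n * (n ! : ℝ) ^ θ := by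
        rw [Real.mul_rpow (by positivity) (by positivity), ← Real.exp_mul, Real.exp_nat_mul]

lemma mul_natCast_rpow_pow_div_factorial_le {B θ : ℝ} (hB : 0 ≤ B) (hθ₀ : 0 ≤ θ) (hθ₁ : θ < 1)
    (n : ℕ) :
    (B * (n : ℝ) ^ θ) ^ n / n ! ≤
      2⁻¹ ^ n * Real.exp ((1 - θ) * (2 * B * Real.exp θ) ^ (1 - θ)⁻¹) := by
  have hfac : (n ! : ℝ) ^ θ / n ! = ((n ! : ℝ) ^ (1 - θ))⁻¹ := by
    rw [← Real.rpow_neg (by positivity), neg_sub, Real.rpow_sub_one (by positivity)]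
  calc (B * (n : ℝ) ^ θ) ^ n / n !
      ≤ B ^ n * (Real.exp θ ^ n * (n ! : ℝ) ^ θ) / n ! := by
        rw [mul_pow]
        gcongr
        exact natCast_rpow_pow_self_le hθ₀ n
    _ = (B * Real.exp θ) ^ n * ((n ! : ℝ) ^ θ / n !) := by ring
    _ = 2⁻¹ ^ n * ((2 * B * Real.exp θ) ^ n / (n ! : ℝ) ^ (1 - θ)) := by
        rw [hfac, div_eq_mul_inv, ← mul_assoc, ← mul_pow, mul_assoc 2 B,
          inv_mul_cancel_left₀ two_ne_zero]
    _ ≤ 2⁻¹ ^ n * Real.exp ((1 - θ) * (2 * B * Real.exp θ) ^ (1 - θ)⁻¹) := by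
        gcongr
        exact pow_div_factorial_rpow_le_exp (by positivity) (sub_pos.2 hθ₁) n

end Growth

section ExponentialIntegrability

open scoped Nat ENNReal NNReal

lemma ofReal_exp_norm_eq_tsum {E : Type*} [SeminormedAddGroup E] (v : E) :
    ENNReal.ofReal (Real.exp ‖v‖) = ∑' n : ℕ, ‖v‖ₑ ^ n / (n ! : ℝ≥0∞) := by
  rw [Real.exp_eq_exp_ℝ, NormedSpace.exp_eq_tsum_div,
    ENNReal.ofReal_tsum_of_nonneg (fun n ↦ by positivity) (Real.summable_pow_div_factorial _)]
  refine tsum_congr fun n ↦ ?_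
  rw [ENNReal.ofReal_div_of_pos (by positivity), ENNReal.ofReal_pow (norm_nonneg v), ofReal_norm,
    ENNReal.ofReal_natCast]

variable {X : Type*} [MeasurableSpace X] {μ : Measure X}

lemma lintegral_enorm_pow_eq_eLpNorm_pow {ε : Type*} [ENorm ε] (f : X → ε) {n : ℕ} (hn : n ≠ 0) :
    ∫⁻ x, ‖f x‖ₑ ^ n ∂μ = eLpNorm f n μ ^ n := by
  simpa using (eLpNorm_nnreal_pow_eq_lintegral (f := f) (μ := μ) (Nat.cast_ne_zero.2 hn)).symm

variable {E : Type*} [SeminormedAddCommGroup E] {f : X → E}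

lemma lintegral_exp_norm_eq_measure_univ_add_tsum (hf : AEStronglyMeasurable f μ) :
    ∫⁻ x, ENNReal.ofReal (Real.exp ‖f x‖) ∂μ =
      μ Set.univ + ∑' n : ℕ, eLpNorm f (n + 1 : ℕ) μ ^ (n + 1) / ((n + 1)! : ℝ≥0∞) := by
  have hterm (n : ℕ) : ∫⁻ x, ‖f x‖ₑ ^ (n + 1) / ((n + 1)! : ℝ≥0∞) ∂μ =
      eLpNorm f (n + 1 : ℕ) μ ^ (n + 1) / ((n + 1)! : ℝ≥0∞) := by
    simp only [div_eq_mul_inv]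
    rw [lintegral_mul_const' _ _ (by simp [Nat.factorial_ne_zero]),
      lintegral_enorm_pow_eq_eLpNorm_pow f n.succ_ne_zero]
  simp_rw [ofReal_exp_norm_eq_tsum]
  rw [lintegral_tsum fun n ↦ (hf.enorm.pow_const n).div_const _,
    tsum_eq_zero_add' ENNReal.summable, tsum_congr hterm]
  simp

theorem lintegral_exp_norm_le_of_eLpNorm_le {B θ : ℝ} (hB : 0 ≤ B) (hθ₀ : 0 ≤ θ) (hθ₁ : θ < 1)
    (hf : AEStronglyMeasurable f μ)
    (hfB : ∀ n : ℕ, 1 ≤ n → eLpNorm f n μ ≤ ENNReal.ofReal (B * (n : ℝ) ^ θ)) :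
    ∫⁻ x, ENNReal.ofReal (Real.exp ‖f x‖) ∂μ ≤
      μ Set.univ +
        ENNReal.ofReal (Real.exp ((1 - θ) * (2 * B * Real.exp θ) ^ (1 - θ)⁻¹)) := by
  set R : ℝ := Real.exp ((1 - θ) * (2 * B * Real.exp θ) ^ (1 - θ)⁻¹)
  have hterm (n : ℕ) (hn : 1 ≤ n) :
      eLpNorm f n μ ^ n / (n ! : ℝ≥0∞) ≤ 2⁻¹ ^ n * ENNReal.ofReal R :=
    calc eLpNorm f n μ ^ n / (n ! : ℝ≥0∞)
        ≤ ENNReal.ofReal (B * (n : ℝ) ^ θ) ^ n / (n ! : ℝ≥0∞) := by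
          gcongr
          exact hfB n hn
      _ = ENNReal.ofReal ((B * (n : ℝ) ^ θ) ^ n / n !) := by
          rw [ENNReal.ofReal_div_of_pos (by positivity), ENNReal.ofReal_pow (by positivity),
            ENNReal.ofReal_natCast]
      _ ≤ ENNReal.ofReal (2⁻¹ ^ n * R) :=
          ENNReal.ofReal_le_ofReal (mul_natCast_rpow_pow_div_factorial_le hB hθ₀ hθ₁ n)
      _ = 2⁻¹ ^ n * ENNReal.ofReal R := by
          rw [ENNReal.ofReal_mul (by positivity), ENNReal.ofReal_pow (by positivity),
            ENNReal.ofReal_inv_of_pos two_pos, ENNReal.ofReal_ofNat]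
  have hgeom : ∑' n : ℕ, (2⁻¹ : ℝ≥0∞) ^ (n + 1) = 1 := by
    rw [ENNReal.tsum_geometric_add_one, ENNReal.one_sub_inv_two, inv_inv,
      ENNReal.inv_mul_cancel two_ne_zero ENNReal.ofNat_ne_top]
  calc ∫⁻ x, ENNReal.ofReal (Real.exp ‖f x‖) ∂μ
      = μ Set.univ + ∑' n : ℕ, eLpNorm f (n + 1 : ℕ) μ ^ (n + 1) / ((n + 1)! : ℝ≥0∞) :=
        lintegral_exp_norm_eq_measure_univ_add_tsum hf
    _ ≤ μ Set.univ + ∑' n : ℕ, 2⁻¹ ^ (n + 1) * ENNReal.ofReal R := by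
        gcongr with n
        exact hterm (n + 1) n.succ_pos
    _ = μ Set.univ + ENNReal.ofReal R := by rw [ENNReal.tsum_mul_right, hgeom, one_mul]

theorem statement8_general (M : ℝ≥0) {K θ : ℝ} (hK : 0 < K) (hθ₀ : 0 ≤ θ) (hθ₁ : θ < 1) :
    ∃ C : ℝ, 0 < C ∧ ∃ κ : ℝ, 0 < κ ∧
      ∀ {X : Type*} [MeasurableSpace X] (μ : Measure X), μ Set.univ ≤ M →
      ∀ {E : Type*} [SeminormedAddCommGroup E] (f : X → E), AEStronglyMeasurable f μ →
      ∀ A : ℝ, 0 ≤ A →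
        (∀ n : ℕ, 1 ≤ n → eLpNorm f n μ ≤ ENNReal.ofReal (K * A * (n : ℝ) ^ θ)) →
        ∫⁻ x, ENNReal.ofReal (Real.exp ‖f x‖) ∂μ ≤
          ENNReal.ofReal (C * Real.exp (κ * A ^ (1 - θ)⁻¹)) := by
  have : 0 < 1 - θ := sub_pos.2 hθ₁
  refine ⟨M + 1, by positivity, (1 - θ) * (2 * K * Real.exp θ) ^ (1 - θ)⁻¹, by positivity, ?_⟩
  intro X _ μ hμ E _ f hf A hA hfA
  have hscale : (1 - θ) * (2 * (K * A) * Real.exp θ) ^ (1 - θ)⁻¹ =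
      (1 - θ) * (2 * K * Real.exp θ) ^ (1 - θ)⁻¹ * A ^ (1 - θ)⁻¹ := by
    rw [mul_assoc (1 - θ), ← Real.mul_rpow (by positivity) hA]
    ring_nf
  have hint := lintegral_exp_norm_le_of_eLpNorm_le (mul_nonneg hK.le hA) hθ₀ hθ₁ hf hfA
  rw [hscale] at hint
  set R : ℝ := Real.exp ((1 - θ) * (2 * K * Real.exp θ) ^ (1 - θ)⁻¹ * A ^ (1 - θ)⁻¹)
  have hR : 1 ≤ R := Real.one_le_exp (by positivity)
  calc ∫⁻ x, ENNReal.ofReal (Real.exp ‖f x‖) ∂μ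
      ≤ M + ENNReal.ofReal R := hint.trans (by gcongr)
    _ = ENNReal.ofReal (M + R) := by
        rw [ENNReal.ofReal_add M.coe_nonneg (by positivity), ENNReal.ofReal_coe_nnreal]
    _ ≤ ENNReal.ofReal ((M + 1) * R) := by
        rw [add_one_mul]
        gcongr
        exact le_mul_of_one_le_right M.coe_nonneg hR

end ExponentialIntegrability

/-- Abstract exponential integrability: on a finite measure space, for each `K > 0` there are
`C, κ > 0` (depending only on `K` and `μ(X)`) such that any measurable `φ` with
`‖φ‖_{L^p(μ)} ≤ K A p^{3/4}` for all real `p ≥ 1` satisfies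
`∫ e^{|φ|} dμ ≤ C exp(κ A⁴)`. -/
theorem statement8 {X : Type*} [MeasurableSpace X] (μ : Measure X)
    (hμ : μ Set.univ < ⊤) (K : ℝ) (hK : 0 < K) :
    ∃ C : ℝ, 0 < C ∧ ∃ κ : ℝ, 0 < κ ∧
      ∀ φ : X → ℝ, Measurable φ → ∀ A : ℝ, 0 ≤ A →
        (∀ p : ℝ, 1 ≤ p →
          eLpNorm φ (ENNReal.ofReal p) μ ≤ ENNReal.ofReal (K * A * p ^ ((3 : ℝ) / 4))) →
        ∫⁻ x, ENNReal.ofReal (Real.exp |φ x|) ∂μ ≤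
          ENNReal.ofReal (C * Real.exp (κ * A ^ 4)) := by
  obtain ⟨C, hC, κ, hκ, hbound⟩ := statement8_general (μ Set.univ).toNNReal hK
    (show (0 : ℝ) ≤ 3 / 4 by norm_num) (by norm_num)
  refine ⟨C, hC, κ, hκ, fun φ hφ A hA hφA ↦ ?_⟩
  have hexponent : A ^ (1 - 3 / 4 : ℝ)⁻¹ = A ^ 4 := by
    rw [show (1 - 3 / 4 : ℝ)⁻¹ = (4 : ℕ) by norm_num, Real.rpow_natCast]
  simpa only [hexponent, Real.norm_eq_abs] using
    hbound μ (ENNReal.coe_toNNReal hμ.ne).ge φ hφ.aestronglyMeasurable A hA fun n hn ↦ by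
      simpa only [ENNReal.ofReal_natCast] using hφA n (Nat.one_le_cast.2 hn)
end
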